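/- Under Assumptions (A), (B) and (C): let {h^ε}_{0<ε≤ε₀} ∈ 𝓑_V with h^ε → h pointwise, and for each ε let η^ε_t(·;h^ε) be a selection with η^ε_t(x;h^ε) ∈ argmin_{u∈U}[f_{t,t}(x,u) + Λ^ε_t(x,u;h^ε)] for all x. Then every sequence ε_n → 0⁺ has a subsequence along which η^{ε_n}_t(x;h^{ε_n}) converges in U for every x ∈ ℤ, and every such pointwise limit η⁰ satisfies η⁰(x) ∈ argmin_{u∈U}[f_{t,t}(x,u) + Λ_t(x,u;h)] for every x ∈ ℤ. -/

import Mathlib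

open Filter Topology

/-- The setup for a countable-stated (here `ℤ`-stated) risk-sensitive MDP with horizon `T`,
transition kernels `q ε t · x u` (for `0 < ε ≤ eps0`), rate functions `I`, running costs
`f τ t x u` and terminal costs `g τ x`.  The Lyapunov function `V` is positive and inf-finite. -/
structure RSSetup (U : Type*) [MetricSpace U] where
  T : ℕ
  eps0 : ℝ
  eps0_pos : 0 < eps0
  V : ℤ → ℝ
  V_pos : ∀ x, 0 < V x
  V_infFinite : ∀ K : ℝ, {x : ℤ | V x ≤ K}.Finite
  q : ℝ → ℕ → ℤ → U → ℤ → ℝ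
  q_nonneg : ∀ ε ∈ Set.Ioc (0 : ℝ) eps0, ∀ t ∈ Finset.Icc 1 T, ∀ (x : ℤ) (u : U) (z : ℤ),
    0 ≤ q ε t x u z
  q_pmf : ∀ ε ∈ Set.Ioc (0 : ℝ) eps0, ∀ t ∈ Finset.Icc 1 T, ∀ (x : ℤ) (u : U),
    HasSum (q ε t x u) 1
  I : ℕ → ℤ → U → ℤ → ENNReal
  I_subfin : ∀ (t : ℕ) (x : ℤ) (u : U) (K : ENNReal), K ≠ ⊤ → {z : ℤ | I t x u z ≤ K}.Finite
  f : ℕ → ℕ → ℤ → U → ℝ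
  g : ℕ → ℤ → ℝ

namespace RSSetup

variable {U : Type*} [MetricSpace U]

/-- `Λ^ε_t(x,u;h) = ε log ∑_z exp(h(z)/ε) q^ε_t(z;x,u)`. -/
noncomputable def lamE (S : RSSetup U) (ε : ℝ) (t : ℕ) (x : ℤ) (u : U) (h : ℤ → ℝ) : ℝ :=
  ε * Real.log (∑' z : ℤ, Real.exp (h z / ε) * S.q ε t x u z)

/-- `Λ_t(x,u;h) = sup_z [h(z) - I_t(z;x,u)]` (the supremum being over the points where the
rate function is finite). -/
noncomputable def lam (S : RSSetup U) (t : ℕ) (x : ℤ) (u : U) (h : ℤ → ℝ) : ℝ :=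
  sSup ((fun z => h z - (S.I t x u z).toReal) '' {z : ℤ | S.I t x u z ≠ ⊤})

/-- Membership in `B_V`: bounded below and `|h(x)|/V(x) → 0` as `|x| → ∞`. -/
def memBV (S : RSSetup U) (h : ℤ → ℝ) : Prop :=
  BddBelow (Set.range h) ∧
    Tendsto (fun x : ℤ => |h x| / S.V x) Filter.cofinite (nhds 0)

/-- The pointwise supremum `x ↦ sup_{0<ε≤ε₀} h^ε(x)` of a family. -/
noncomputable def supFam (S : RSSetup U) (h : ℝ → ℤ → ℝ) : ℤ → ℝ :=
  fun x => sSup ((fun ε => h ε x) '' Set.Ioc (0 : ℝ) S.eps0)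

/-- Membership of a family `{h^ε}_{0<ε≤ε₀}` in `𝓑_V`: each member is in `B_V`, the family is
uniformly bounded below, and the pointwise supremum `sup_ε h^ε` belongs to `B_V`. -/
def memFam (S : RSSetup U) (h : ℝ → ℤ → ℝ) : Prop :=
  (∀ ε ∈ Set.Ioc (0 : ℝ) S.eps0, S.memBV (h ε)) ∧
  (∃ c : ℝ, ∀ ε ∈ Set.Ioc (0 : ℝ) S.eps0, ∀ x, c ≤ h ε x) ∧
  (∀ x, BddAbove ((fun ε => h ε x) '' Set.Ioc (0 : ℝ) S.eps0)) ∧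
  S.memBV (S.supFam h)

/-- Assumption (A) with parameter `λ₀`. -/
def AssumptionA (S : RSSetup U) (lam0 : ℝ) : Prop :=
  0 < lam0 ∧
  -- (A1): `sup_{0<ε≤ε₀} Λ^ε_t(x,u;λ₀ V) < ∞` (in particular the defining sums converge)
  (∀ t ∈ Finset.Icc 1 S.T, ∀ (x : ℤ) (u : U),
    (∀ ε ∈ Set.Ioc (0 : ℝ) S.eps0,
      Summable fun z : ℤ => Real.exp (lam0 * S.V z / ε) * S.q ε t x u z) ∧
    ∃ C : ℝ, ∀ ε ∈ Set.Ioc (0 : ℝ) S.eps0, S.lamE ε t x u (fun z => lam0 * S.V z) ≤ C) ∧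
  -- (A2): continuity in `u`, and `Λ^ε_t(x,u^ε;h) → Λ_t(x,u;h)` whenever `u^ε → u`
  (∀ t ∈ Finset.Icc 1 S.T, ∀ x : ℤ, ∀ h : ℤ → ℝ, S.memBV h →
    (∀ ε ∈ Set.Ioc (0 : ℝ) S.eps0, Continuous fun u : U => S.lamE ε t x u h) ∧
    (∀ (u : U) (uu : ℝ → U), Tendsto uu (nhdsWithin 0 (Set.Ioi 0)) (nhds u) →
      Tendsto (fun ε => S.lamE ε t x (uu ε) h) (nhdsWithin 0 (Set.Ioi 0))
        (nhds (S.lam t x u h)))) ∧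
  -- (A3): `limsup_{|x|→∞} sup_{0<ε≤ε₀} Λ^ε_t(x,u;λV)/(λV(x)) < K_u` for `λ ∈ (0,λ₀)`
  (∀ t ∈ Finset.Icc 1 S.T, ∀ u : U, ∃ Ku : ℝ, ∀ lam' ∈ Set.Ioo (0 : ℝ) lam0,
    ∃ c < Ku, ∀ᶠ x in (Filter.cofinite : Filter ℤ), ∀ ε ∈ Set.Ioc (0 : ℝ) S.eps0,
      S.lamE ε t x u (fun z => lam' * S.V z) ≤ c * (lam' * S.V x))

/-- Assumption (B). -/
def AssumptionB (S : RSSetup U) : Prop :=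
  (∀ τ ∈ Finset.Icc 1 S.T, ∀ t ∈ Finset.Icc 1 S.T, ∀ u : U,
    S.memBV fun x => S.f τ t x u) ∧
  (∀ τ ∈ Finset.Icc 1 S.T, S.memBV (S.g τ)) ∧
  (∀ t ∈ Finset.Icc 1 S.T, ∀ x : ℤ, Continuous fun u : U => S.f t t x u) ∧
  (∀ t ∈ Finset.Icc 1 S.T, ∀ x : ℤ, ∀ K : ℝ, IsCompact {u : U | S.f t t x u ≤ K})

/-- Assumption (C) with parameter `λ₀`: growth conditions over the sublevel sets
`B_{t,λ}(x) = {u : f_{t,t}(x,u) ≤ λ V(x)}`. -/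
def AssumptionC (S : RSSetup U) (lam0 : ℝ) : Prop :=
  0 < lam0 ∧ ∃ K1 : ℝ,
    ∀ lam' ∈ Set.Ioo (0 : ℝ) lam0, ∀ τ ∈ Finset.Icc 1 S.T, ∀ t ∈ Finset.Icc 1 S.T,
      (∀ c > K1, ∀ᶠ x in (Filter.cofinite : Filter ℤ), ∀ u : U,
        S.f t t x u ≤ lam' * S.V x → S.f τ t x u ≤ c * (lam' * S.V x)) ∧
      (∀ c > K1, ∀ᶠ x in (Filter.cofinite : Filter ℤ), ∀ ε ∈ Set.Ioo (0 : ℝ) S.eps0, ∀ u : U,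
        S.f t t x u ≤ lam' * S.V x →
          S.lamE ε t x u (fun z => lam' * S.V z) ≤ c * (lam' * S.V x))

/-- The cost `J^ε_{τ,t}(x;π)` of a Markov policy `π`, defined backward from
`J^ε_{τ,T+1} = g_τ`. -/
noncomputable def Jeps (S : RSSetup U) (ε : ℝ) (π : ℕ → ℤ → U) (τ t : ℕ) : ℤ → ℝ :=
  if h : S.T + 1 ≤ t then S.g τ
  else fun x => S.f τ t x (π t x) + S.lamE ε t x (π t x) (S.Jeps ε π τ (t + 1))
termination_by S.T + 1 - t
decreasing_by omega

/-- The limit cost `J_{τ,t}(x;π)` of a Markov policy `π`, defined backward from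
`J_{τ,T+1} = g_τ`. -/
noncomputable def Jlim (S : RSSetup U) (π : ℕ → ℤ → U) (τ t : ℕ) : ℤ → ℝ :=
  if h : S.T + 1 ≤ t then S.g τ
  else fun x => S.f τ t x (π t x) + S.lam t x (π t x) (S.Jlim π τ (t + 1))
termination_by S.T + 1 - t
decreasing_by omega

/-- `(η, Θ)` solves the `ε`-recursion system. -/
def SolvesEpsSystem (S : RSSetup U) (ε : ℝ) (η : ℕ → ℤ → U) (Θ : ℕ → ℕ → ℤ → ℝ) : Prop :=
  (∀ τ ∈ Finset.Icc 1 S.T, Θ τ (S.T + 1) = S.g τ) ∧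
  (∀ t ∈ Finset.Icc 1 S.T, ∀ (x : ℤ) (u : U),
    S.f t t x (η t x) + S.lamE ε t x (η t x) (Θ t (t + 1)) ≤
      S.f t t x u + S.lamE ε t x u (Θ t (t + 1))) ∧
  (∀ τ ∈ Finset.Icc 1 S.T, ∀ t ∈ Finset.Icc 1 S.T, ∀ x : ℤ,
    Θ τ t x = S.f τ t x (η t x) + S.lamE ε t x (η t x) (Θ τ (t + 1)))

/-- `(η, Θ)` solves the limit recursion system. -/
def SolvesLimSystem (S : RSSetup U) (η : ℕ → ℤ → U) (Θ : ℕ → ℕ → ℤ → ℝ) : Prop :=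
  (∀ τ ∈ Finset.Icc 1 S.T, Θ τ (S.T + 1) = S.g τ) ∧
  (∀ t ∈ Finset.Icc 1 S.T, ∀ (x : ℤ) (u : U),
    S.f t t x (η t x) + S.lam t x (η t x) (Θ t (t + 1)) ≤
      S.f t t x u + S.lam t x u (Θ t (t + 1))) ∧
  (∀ τ ∈ Finset.Icc 1 S.T, ∀ t ∈ Finset.Icc 1 S.T, ∀ x : ℤ,
    Θ τ t x = S.f τ t x (η t x) + S.lam t x (η t x) (Θ τ (t + 1)))

/-- `π` is a time-inconsistent `ε`-risk-sensitive equilibrium. -/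
def IsEpsEquilibrium (S : RSSetup U) (ε : ℝ) (π : ℕ → ℤ → U) : Prop :=
  ∀ t ∈ Finset.Icc 1 S.T, ∀ (x : ℤ) (u : U),
    S.Jeps ε π t t x ≤ S.f t t x u + S.lamE ε t x u (S.Jeps ε π t (t + 1))

/-- `π` is a time-inconsistent risk-sensitive equilibrium for the limit cost. -/
def IsLimEquilibrium (S : RSSetup U) (π : ℕ → ℤ → U) : Prop :=
  ∀ t ∈ Finset.Icc 1 S.T, ∀ (x : ℤ) (u : U),
    S.Jlim π t t x ≤ S.f t t x u + S.lam t x u (S.Jlim π t (t + 1))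

end RSSetup

/-!
The convergence `Λ^ε(h) → Λ(h)` is assumed for a fixed test function `h ∈ B_V`; it extends to
`Λ^ε(h^ε) → Λ(h)` by squeezing `h^ε` between fixed test functions. From below, compare with a
function that is constant except at a near-maximizer of `h - I`. From above, compare with
`h + δ` on a finite set and with the envelope `H = sup_ε h^ε` off it. The values of `H - I` off the
finite set are harmless because `H + √V` is again in `B_V`, so that `H + √V - I` is bounded above.

With this convergence, argmin selections stay in sublevel sets of `f_{t,t}(x,·)`, which are
compact, so a diagonal subsequence converges for every `x`, and the minimality inequality passes
to the limit.
-/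

section SubgrowthFunctions

open Asymptotics

variable {ι : Type*} {V h k H : ι → ℝ} {c : ℝ}

/-- The class `B_V` over an arbitrary discrete state space `ι`: functions bounded below and
negligible with respect to `V` at infinity, infinity being encoded by the cofinite filter. -/
def IsSubgrowth (V h : ι → ℝ) : Prop :=
  BddBelow (Set.range h) ∧ h =o[cofinite] V

theorem isLittleO_sqrt_of_tendsto_atTop {l : Filter ι} (hV : Tendsto V l atTop) :
    (fun z => √(V z)) =o[l] V := by
  have hsq : (fun z => √(V z) ^ 1) =o[l] fun z => √(V z) ^ 2 :=
    (isLittleO_pow_pow_atTop_of_lt one_lt_two).comp_tendsto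
      (Real.tendsto_sqrt_atTop.comp hV)
  refine hsq.congr' (by simp) ?_
  filter_upwards [hV.eventually_ge_atTop 0] with z hz using Real.sq_sqrt hz

theorem isSubgrowth_const (hV : Tendsto V cofinite atTop) (c : ℝ) : IsSubgrowth V fun _ => c :=
  ⟨⟨c, by rintro _ ⟨_, rfl⟩; exact le_rfl⟩,
    isLittleO_const_left.2 (.inr (tendsto_norm_atTop_atTop.comp hV))⟩

namespace IsSubgrowth

theorem add (hh : IsSubgrowth V h) (hk : IsSubgrowth V k) :
    IsSubgrowth V fun z => h z + k z := by
  obtain ⟨⟨c, hc⟩, ho⟩ := hh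
  obtain ⟨⟨d, hd⟩, ko⟩ := hk
  refine ⟨⟨c + d, ?_⟩, ho.add ko⟩
  rintro _ ⟨z, rfl⟩
  exact add_le_add (hc ⟨z, rfl⟩) (hd ⟨z, rfl⟩)

theorem of_le_of_le (hV : Tendsto V cofinite atTop) (hH : IsSubgrowth V H)
    (hck : ∀ z, c ≤ k z) (hkH : ∀ z, k z ≤ H z) : IsSubgrowth V k := by
  refine ⟨⟨c, by rintro _ ⟨z, rfl⟩; exact hck z⟩, ?_⟩
  refine IsBigO.trans_isLittleO (IsBigO.of_bound 1 (Eventually.of_forall fun z => ?_))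
    ((isSubgrowth_const hV c).2.norm_left.add hH.2.norm_left)
  rw [one_mul, Real.norm_eq_abs, Real.norm_of_nonneg (by positivity)]
  exact (abs_le_max_abs_abs (hck z) (hkH z)).trans
    (max_le_add_of_nonneg (abs_nonneg _) (abs_nonneg _))

theorem of_bounded (hV : Tendsto V cofinite atTop) {C : ℝ} (hck : ∀ z, c ≤ k z)
    (hkC : ∀ z, k z ≤ C) : IsSubgrowth V k :=
  of_le_of_le hV (isSubgrowth_const hV C) hck hkC

theorem sqrt (hV : Tendsto V cofinite atTop) : IsSubgrowth V fun z => √(V z) :=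
  ⟨⟨0, by rintro _ ⟨z, rfl⟩; exact Real.sqrt_nonneg _⟩, isLittleO_sqrt_of_tendsto_atTop hV⟩

theorem piecewise (hh : IsSubgrowth V h) (hk : IsSubgrowth V k) (F : Set ι)
    [∀ z, Decidable (z ∈ F)] : IsSubgrowth V (F.piecewise h k) := by
  refine ⟨(hh.1.union hk.1).mono ?_, isLittleO_iff.2 fun a ha => ?_⟩
  · rintro _ ⟨z, rfl⟩
    by_cases hz : z ∈ F <;> simp [hz]
  · filter_upwards [hh.2.bound ha, hk.2.bound ha] with z hhz hkz
    by_cases hz : z ∈ F <;> simpa only [hz, Set.piecewise_eq_of_mem, Set.piecewise_eq_of_notMem,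
      not_false_eq_true]

theorem eventually_le_mul (hV : Tendsto V cofinite atTop) (hh : IsSubgrowth V h) {a : ℝ}
    (ha : 0 < a) : ∀ᶠ z in cofinite, h z ≤ a * V z := by
  filter_upwards [hh.2.bound ha, hV.eventually_ge_atTop 0] with z hz hVz
  rw [Real.norm_of_nonneg hVz] at hz
  exact (Real.le_norm_self _).trans hz

end IsSubgrowth

end SubgrowthFunctions

section EntropicRisk

variable {ι : Type*} {ε c : ℝ} {p h k : ι → ℝ}

/-- The functional `Λ^ε(h) = ε log ∑_z exp(h(z)/ε) p(z)` of a weight `p` on an arbitrary type. It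
is meaningful when the sum converges; otherwise its value is the junk value `ε log 0 = 0`. -/
noncomputable def entropicRisk (ε : ℝ) (p h : ι → ℝ) : ℝ :=
  ε * Real.log (∑' z, Real.exp (h z / ε) * p z)

theorem summable_exp_div_mul_of_eventually_le (hε : 0 ≤ ε) (hp : ∀ z, 0 ≤ p z)
    (hkh : ∀ᶠ z in cofinite, k z ≤ h z) (hh : Summable fun z => Real.exp (h z / ε) * p z) :
    Summable fun z => Real.exp (k z / ε) * p z := by
  refine hh.of_norm_bounded_eventually ?_
  filter_upwards [hkh] with z hz
  rw [Real.norm_of_nonneg (mul_nonneg (Real.exp_pos _).le (hp z))]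
  have := hp z
  gcongr

theorem tsum_exp_div_mul_pos (hp : ∀ z, 0 ≤ p z) (hp1 : HasSum p 1)
    (hh : Summable fun z => Real.exp (h z / ε) * p z) :
    0 < ∑' z, Real.exp (h z / ε) * p z := by
  obtain ⟨z, hz⟩ : ∃ z, p z ≠ 0 := by
    by_contra! hp0
    exact one_ne_zero (hp1.unique (by simp [funext hp0]))
  exact hh.tsum_pos (fun y => mul_nonneg (Real.exp_pos _).le (hp y)) z
    (mul_pos (Real.exp_pos _) ((hp z).lt_of_ne' hz))

theorem entropicRisk_mono (hε : 0 ≤ ε) (hp : ∀ z, 0 ≤ p z) (hp1 : HasSum p 1)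
    (hkh : ∀ z, k z ≤ h z) (hh : Summable fun z => Real.exp (h z / ε) * p z) :
    entropicRisk ε p k ≤ entropicRisk ε p h := by
  have hk := summable_exp_div_mul_of_eventually_le hε hp (.of_forall hkh) hh
  refine mul_le_mul_of_nonneg_left
    (Real.log_le_log (tsum_exp_div_mul_pos hp hp1 hk) (hk.tsum_le_tsum (fun z => ?_) hh)) hε
  have := hp z
  have := hkh z
  gcongr

theorem entropicRisk_const (hε : ε ≠ 0) (hp1 : HasSum p 1) (c : ℝ) :
    entropicRisk ε p (fun _ => c) = c := by
  rw [entropicRisk, tsum_mul_left, hp1.tsum_eq, mul_one, Real.log_exp, mul_div_cancel₀ _ hε]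

theorem le_entropicRisk (hε : 0 < ε) (hp : ∀ z, 0 ≤ p z) (hp1 : HasSum p 1)
    (hch : ∀ z, c ≤ h z) (hh : Summable fun z => Real.exp (h z / ε) * p z) :
    c ≤ entropicRisk ε p h :=
  (entropicRisk_const hε.ne' hp1 c).symm.trans_le (entropicRisk_mono hε.le hp hp1 hch hh)

end EntropicRisk

section RateSup

variable {ι : Type*} {J : ι → ENNReal} {h : ι → ℝ}

/-- The functional `Λ(h) = sup_z [h(z) - J(z)]` of a rate function `J`, the supremum being over the
points where `J` is finite. It has the junk value `0` if there is no such point or if `h - J` is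
unbounded above. -/
noncomputable def rateSup (J : ι → ENNReal) (h : ι → ℝ) : ℝ :=
  sSup ((fun z => h z - (J z).toReal) '' {z | J z ≠ ⊤})

theorem sub_toReal_le_rateSup_of_le {C : ℝ} (hC : ∀ z, h z ≤ C) {z : ι} (hz : J z ≠ ⊤) :
    h z - (J z).toReal ≤ rateSup J h := by
  refine le_csSup ⟨C, ?_⟩ ⟨z, hz, rfl⟩
  rintro _ ⟨y, -, rfl⟩
  exact (sub_le_self _ ENNReal.toReal_nonneg).trans (hC y)

end RateSup

/-- The Laplace principle on `B_V`: along `l`, the entropic functionals of the probability mass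
functions `p a` at temperatures `ε a` are defined on `B_V` and converge there to the functional of
the rate function `J`. The index type `α` is arbitrary, so that families indexed by `ε → 0⁺` and
sequences are both covered. -/
structure LaplacePrinciple {α ι : Type*} (l : Filter α) (V : ι → ℝ) (ε : α → ℝ) (p : α → ι → ℝ)
    (J : ι → ENNReal) : Prop where
  eps_pos : ∀ᶠ a in l, 0 < ε a
  nonneg : ∀ᶠ a in l, ∀ z, 0 ≤ p a z
  hasSum_one : ∀ᶠ a in l, HasSum (p a) 1
  summable : ∀ h, IsSubgrowth V h → ∀ᶠ a in l, Summable fun z => Real.exp (h z / ε a) * p a z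
  tendsto : ∀ h, IsSubgrowth V h →
    Tendsto (fun a => entropicRisk (ε a) (p a) h) l (𝓝 (rateSup J h))

namespace LaplacePrinciple

variable {α ι : Type*} {l : Filter α} {V : ι → ℝ} {ε : α → ℝ} {p : α → ι → ℝ} {J : ι → ENNReal}
  {H h : ι → ℝ} {hfam : α → ι → ℝ} {b c : ℝ}

theorem eventually_entropicRisk_le (hL : LaplacePrinciple l V ε p J) (hH : IsSubgrowth V H) :
    ∀ᶠ a in l, ∀ k : ι → ℝ, (∀ z, k z ≤ H z) →
      entropicRisk (ε a) (p a) k ≤ entropicRisk (ε a) (p a) H := by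
  filter_upwards [hL.eps_pos, hL.nonneg, hL.hasSum_one, hL.summable H hH] with a hε hp hp1 hs k hk
  exact entropicRisk_mono hε.le hp hp1 hk hs

theorem exists_ne_top [l.NeBot] (hV : Tendsto V cofinite atTop)
    (hL : LaplacePrinciple l V ε p J) : ∃ z, J z ≠ ⊤ := by
  by_contra! hJ
  have hlim : Tendsto (fun a => entropicRisk (ε a) (p a) fun _ => 1) l (𝓝 1) := by
    refine tendsto_const_nhds.congr' ?_
    filter_upwards [hL.eps_pos, hL.hasSum_one] with a hε hp1
    exact (entropicRisk_const hε.ne' hp1 1).symm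
  have hone : rateSup J (fun _ => 1) = 1 :=
    tendsto_nhds_unique (hL.tendsto _ (isSubgrowth_const hV 1)) hlim
  simp [rateSup, hJ] at hone

-- Truncating `h` at the level `h z` makes the supremum that defines `rateSup` a genuine one.
theorem sub_toReal_le_rateSup [l.NeBot] (hV : Tendsto V cofinite atTop)
    (hL : LaplacePrinciple l V ε p J) (hh : IsSubgrowth V h) {z : ι} (hz : J z ≠ ⊤) :
    h z - (J z).toReal ≤ rateSup J h := by
  obtain ⟨c, hc⟩ := hh.1
  have hch : ∀ y, c ≤ h y := fun y => hc ⟨y, rfl⟩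
  have htrunc : IsSubgrowth V fun y => min (h y) (h z) :=
    .of_bounded hV (fun y => le_min (hch y) (hch z)) fun _ => min_le_right _ _
  calc h z - (J z).toReal
      = min (h z) (h z) - (J z).toReal := by rw [min_self]
    _ ≤ rateSup J fun y => min (h y) (h z) :=
      sub_toReal_le_rateSup_of_le (h := fun y => min (h y) (h z)) (fun _ => min_le_right _ _) hz
    _ ≤ rateSup J h := by
      refine le_of_tendsto_of_tendsto (hL.tendsto _ htrunc) (hL.tendsto _ hh) ?_
      filter_upwards [hL.eventually_entropicRisk_le hh] with a hmono
      exact hmono _ fun _ => min_le_left _ _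

theorem eventually_lt_entropicRisk (hV : Tendsto V cofinite atTop)
    (hL : LaplacePrinciple l V ε p J) (hH : IsSubgrowth V H)
    (hc : ∀ᶠ a in l, ∀ z, c ≤ hfam a z) (hfamH : ∀ᶠ a in l, ∀ z, hfam a z ≤ H z) {z₀ : ι}
    (hz₀ : J z₀ ≠ ⊤) (hlim : Tendsto (fun a => hfam a z₀) l (𝓝 (h z₀)))
    (hb : b < h z₀ - (J z₀).toReal) :
    ∀ᶠ a in l, b < entropicRisk (ε a) (p a) (hfam a) := by
  classical
  obtain ⟨d, hbd, hdh⟩ := exists_between (lt_sub_iff_add_lt.1 hb)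
  set k : ι → ℝ := Function.update (fun _ => c) z₀ d
  have hk_le : ∀ z, k z ≤ max c d := fun z => by
    by_cases hz : z = z₀ <;> simp [k, hz]
  have hk : IsSubgrowth V k :=
    .of_bounded hV (c := min c d) (fun z => by by_cases hz : z = z₀ <;> simp [k, hz]) hk_le
  have hbk : b < rateSup J k :=
    calc b < d - (J z₀).toReal := lt_sub_iff_add_lt.2 hbd
      _ = k z₀ - (J z₀).toReal := by simp [k]
      _ ≤ rateSup J k := sub_toReal_le_rateSup_of_le hk_le hz₀
  filter_upwards [(hL.tendsto k hk).eventually_const_lt hbk, hL.eps_pos, hL.nonneg, hL.hasSum_one,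
    hL.summable H hH, hc, hfamH, hlim.eventually_const_lt hdh] with a hbk hε hp hp1 hs hca hHa hda
  refine hbk.trans_le (entropicRisk_mono hε.le hp hp1 (fun z => ?_)
    (summable_exp_div_mul_of_eventually_le hε.le hp (.of_forall hHa) hs))
  rcases eq_or_ne z z₀ with rfl | hz
  · simpa [k] using hda.le
  · simpa [k, hz] using hca z

theorem exists_finite_forall_notMem_sub_toReal_le [l.NeBot] (hV : Tendsto V cofinite atTop)
    (hL : LaplacePrinciple l V ε p J) (hH : IsSubgrowth V H) (b : ℝ) :
    ∃ F : Set ι, F.Finite ∧ ∀ z ∉ F, J z ≠ ⊤ → H z - (J z).toReal ≤ b := by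
  set M := rateSup J fun z => H z + √(V z)
  have hsqrt : ∀ᶠ z in cofinite, M - b ≤ √(V z) :=
    (Real.tendsto_sqrt_atTop.comp hV).eventually_ge_atTop _
  refine ⟨_, eventually_cofinite.1 hsqrt, fun z hzF hz => ?_⟩
  have hz_sqrt : M - b ≤ √(V z) := not_not.1 hzF
  have hzM : H z + √(V z) - (J z).toReal ≤ M :=
    hL.sub_toReal_le_rateSup hV (hH.add (.sqrt hV)) hz
  linarith

theorem rateSup_piecewise_add_le [l.NeBot] (hV : Tendsto V cofinite atTop)
    (hL : LaplacePrinciple l V ε p J) (hh : IsSubgrowth V h) {F : Set ι}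
    [∀ z, Decidable (z ∈ F)] {δ : ℝ} (hδ : rateSup J h + δ ≤ b)
    (hHF : ∀ z ∉ F, J z ≠ ⊤ → H z - (J z).toReal ≤ b) :
    rateSup J (F.piecewise (fun z => h z + δ) H) ≤ b := by
  refine csSup_le (Set.Nonempty.image _ (hL.exists_ne_top hV)) ?_
  rintro _ ⟨z, hz, rfl⟩
  by_cases hzF : z ∈ F
  · have := hL.sub_toReal_le_rateSup hV hh hz
    simp only [hzF, Set.piecewise_eq_of_mem]
    linarith
  · simpa only [hzF, not_false_eq_true, Set.piecewise_eq_of_notMem] using hHF z hzF hz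

theorem eventually_entropicRisk_lt [l.NeBot] (hV : Tendsto V cofinite atTop)
    (hL : LaplacePrinciple l V ε p J) (hH : IsSubgrowth V H) (hh : IsSubgrowth V h)
    (hfamH : ∀ᶠ a in l, ∀ z, hfam a z ≤ H z)
    (hlim : ∀ z, Tendsto (fun a => hfam a z) l (𝓝 (h z))) (hb : rateSup J h < b) :
    ∀ᶠ a in l, entropicRisk (ε a) (p a) (hfam a) < b := by
  classical
  obtain ⟨b', hhb', hb'b⟩ := exists_between hb
  obtain ⟨F, hF, hHF⟩ := hL.exists_finite_forall_notMem_sub_toReal_le hV hH b'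
  set δ := b' - rateSup J h
  have hδ : 0 < δ := sub_pos.2 hhb'
  set k : ι → ℝ := F.piecewise (fun z => h z + δ) H
  have hk : IsSubgrowth V k := (hh.add (isSubgrowth_const hV δ)).piecewise hH F
  have hk_rate : rateSup J k ≤ b' :=
    hL.rateSup_piecewise_add_le hV hh (add_sub_cancel _ _).le hHF
  have hfamF : ∀ᶠ a in l, ∀ z ∈ F, hfam a z < h z + δ :=
    (eventually_all_finite hF).2 fun z _ =>
      (hlim z).eventually_lt_const (lt_add_of_pos_right _ hδ)
  filter_upwards [(hL.tendsto k hk).eventually_lt_const (hk_rate.trans_lt hb'b),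
    hL.eventually_entropicRisk_le hk, hfamF, hfamH] with a hkb hmono hFa hHa
  refine (hmono _ fun z => ?_).trans_lt hkb
  by_cases hz : z ∈ F
  · simpa [k, hz] using (hFa z hz).le
  · simpa [k, hz] using hHa z

theorem tendsto_of_dominated [l.NeBot] (hV : Tendsto V cofinite atTop)
    (hL : LaplacePrinciple l V ε p J) (hH : IsSubgrowth V H)
    (hc : ∀ᶠ a in l, ∀ z, c ≤ hfam a z) (hfamH : ∀ᶠ a in l, ∀ z, hfam a z ≤ H z)
    (hlim : ∀ z, Tendsto (fun a => hfam a z) l (𝓝 (h z))) :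
    Tendsto (fun a => entropicRisk (ε a) (p a) (hfam a)) l (𝓝 (rateSup J h)) := by
  have hch : ∀ z, c ≤ h z := fun z => ge_of_tendsto (hlim z) (hc.mono fun _ ha => ha z)
  have hhH : ∀ z, h z ≤ H z := fun z => le_of_tendsto (hlim z) (hfamH.mono fun _ ha => ha z)
  refine tendsto_order.2 ⟨fun b hb => ?_, fun b hb =>
    hL.eventually_entropicRisk_lt hV hH (.of_le_of_le hV hH hch hhH) hfamH hlim hb⟩
  obtain ⟨_, ⟨z₀, hz₀, rfl⟩, hbz₀⟩ :=
    exists_lt_of_lt_csSup (Set.Nonempty.image _ (hL.exists_ne_top hV)) hb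
  exact hL.eventually_lt_entropicRisk hV hH hc hfamH hz₀ (hlim z₀) hbz₀

end LaplacePrinciple

section Subsequences

variable {α κ X : Type*} [TopologicalSpace X]

theorem tendsto_piecewise_range_of_le_cofinite {l : Filter α} (hl : l ≤ cofinite) {s : κ → α}
    [∀ x, Decidable (x ∈ Set.range s)] {G : α → X} {a : X}
    (hG : Tendsto (fun n => G (s n)) cofinite (𝓝 a)) :
    Tendsto ((Set.range s).piecewise G fun _ => a) l (𝓝 a) := by
  intro W hW
  have hfin : {n | G (s n) ∉ W}.Finite := eventually_cofinite.1 (hG.eventually_mem hW)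
  refine hl (mem_cofinite.2 ((hfin.image s).subset fun x hx => ?_))
  by_cases hxs : x ∈ Set.range s
  · obtain ⟨n, rfl⟩ := hxs
    exact ⟨n, by simpa using hx, rfl⟩
  · simp [hxs, mem_of_mem_nhds hW] at hx

theorem exists_subseq_tendsto_of_isCompact_sublevel [Countable κ] [FirstCountableTopology X]
    {F : κ → X → ℝ} (hF : ∀ i K, IsCompact {u | F i u ≤ K}) {η : ℕ → κ → X}
    (hη : ∀ i, BddAbove (Set.range fun n => F i (η n i))) :
    ∃ φ : ℕ → ℕ, StrictMono φ ∧ ∃ η₀ : κ → X,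
      ∀ i, Tendsto (fun k => η (φ k) i) atTop (𝓝 (η₀ i)) := by
  choose K hK using hη
  obtain ⟨η₀, -, φ, hφ, hlim⟩ :=
    (isCompact_univ_pi fun i => hF i (K i)).tendsto_subseq fun n i _ => hK i ⟨n, rfl⟩
  exact ⟨φ, hφ, η₀, tendsto_pi_nhds.1 hlim⟩

end Subsequences

namespace RSSetup

variable {U : Type*} [MetricSpace U] {S : RSSetup U} {t : ℕ} {hfam : ℝ → ℤ → ℝ} {h : ℤ → ℝ}

/-- The convergence content of Assumption (A) at time `t`: the sums defining `Λ^ε_t(x,u;λ₀V)`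
converge for some `λ₀ > 0`, and `Λ^ε_t(x,u^ε;h) → Λ_t(x,u;h)` for `h ∈ B_V` and `u^ε → u`. -/
structure HasLaplaceLimit (S : RSSetup U) (t : ℕ) : Prop where
  summable : ∃ lam0 > 0, ∀ (x : ℤ) (u : U), ∀ ε ∈ Set.Ioc (0 : ℝ) S.eps0,
    Summable fun z : ℤ => Real.exp (lam0 * S.V z / ε) * S.q ε t x u z
  tendsto : ∀ (x : ℤ) (h : ℤ → ℝ), S.memBV h → ∀ (u : U) (uu : ℝ → U),
    Tendsto uu (𝓝[>] 0) (𝓝 u) →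
      Tendsto (fun ε => S.lamE ε t x (uu ε) h) (𝓝[>] 0) (𝓝 (S.lam t x u h))

theorem AssumptionA.hasLaplaceLimit {lam0 : ℝ} (hA : S.AssumptionA lam0)
    (ht : t ∈ Finset.Icc 1 S.T) : S.HasLaplaceLimit t where
  summable := ⟨lam0, hA.1, fun x u => (hA.2.1 t ht x u).1⟩
  tendsto x h hh := (hA.2.2.1 t ht x h hh).2

theorem tendsto_V_cofinite_atTop (S : RSSetup U) : Tendsto S.V cofinite atTop :=
  tendsto_atTop.2 fun K => (S.V_infFinite K).eventually_cofinite_notMem.mono fun _ hx =>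
    (not_le.1 hx).le

theorem memBV_iff_isSubgrowth : S.memBV h ↔ IsSubgrowth S.V h := by
  refine and_congr_right fun _ => ?_
  rw [← Asymptotics.isLittleO_abs_left,
    Asymptotics.isLittleO_iff_tendsto fun x hx => absurd hx (S.V_pos x).ne']

theorem memFam.le_supFam (hmem : S.memFam hfam) {ε : ℝ} (hε : ε ∈ Set.Ioc 0 S.eps0) (x : ℤ) :
    hfam ε x ≤ S.supFam hfam x :=
  le_csSup (hmem.2.2.1 x) ⟨ε, hε, rfl⟩

namespace HasLaplaceLimit

theorem summable_of_memBV (hS : S.HasLaplaceLimit t) (ht : t ∈ Finset.Icc 1 S.T)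
    (hh : S.memBV h) {ε : ℝ} (hε : ε ∈ Set.Ioc 0 S.eps0) (x : ℤ) (u : U) :
    Summable fun z => Real.exp (h z / ε) * S.q ε t x u z := by
  obtain ⟨lam0, hlam0, hsum⟩ := hS.summable
  exact summable_exp_div_mul_of_eventually_le hε.1.le (S.q_nonneg ε hε t ht x u)
    ((memBV_iff_isSubgrowth.1 hh).eventually_le_mul S.tendsto_V_cofinite_atTop hlam0)
    (hsum x u ε hε)

theorem laplacePrinciple (hS : S.HasLaplaceLimit t) (ht : t ∈ Finset.Icc 1 S.T) (x : ℤ) {u : U}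
    {uu : ℝ → U} (huu : Tendsto uu (𝓝[>] 0) (𝓝 u)) :
    LaplacePrinciple (𝓝[>] 0) S.V (fun ε => ε) (fun ε => S.q ε t x (uu ε)) (S.I t x u) := by
  have hIoc : ∀ᶠ ε in 𝓝[>] (0 : ℝ), ε ∈ Set.Ioc 0 S.eps0 := Ioc_mem_nhdsGT S.eps0_pos
  exact
    { eps_pos := hIoc.mono fun _ hε => hε.1
      nonneg := hIoc.mono fun ε hε => S.q_nonneg ε hε t ht x (uu ε)
      hasSum_one := hIoc.mono fun ε hε => S.q_pmf ε hε t ht x (uu ε)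
      summable := fun _ hh => hIoc.mono fun _ hε =>
        hS.summable_of_memBV ht (memBV_iff_isSubgrowth.2 hh) hε x _
      tendsto := fun h hh => hS.tendsto x h (memBV_iff_isSubgrowth.2 hh) u uu huu }

theorem tendsto_lamE (hS : S.HasLaplaceLimit t) (ht : t ∈ Finset.Icc 1 S.T)
    (hmem : S.memFam hfam) (hptw : ∀ z, Tendsto (fun ε => hfam ε z) (𝓝[>] 0) (𝓝 (h z)))
    (x : ℤ) {u : U} {uu : ℝ → U} (huu : Tendsto uu (𝓝[>] 0) (𝓝 u)) :
    Tendsto (fun ε => S.lamE ε t x (uu ε) (hfam ε)) (𝓝[>] 0) (𝓝 (S.lam t x u h)) := by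
  have hIoc : ∀ᶠ ε in 𝓝[>] (0 : ℝ), ε ∈ Set.Ioc 0 S.eps0 := Ioc_mem_nhdsGT S.eps0_pos
  obtain ⟨c, hc⟩ := hmem.2.1
  exact (hS.laplacePrinciple ht x huu).tendsto_of_dominated S.tendsto_V_cofinite_atTop
    (memBV_iff_isSubgrowth.1 hmem.2.2.2) (hIoc.mono hc) (hIoc.mono fun _ hε => hmem.le_supFam hε)
    hptw

-- The hypothesis on `Λ^ε` concerns families indexed by all small `ε`, so the controls are
-- replaced by their limit `u` at every `ε` that the sequence misses.
theorem tendsto_lamE_seq (hS : S.HasLaplaceLimit t) (ht : t ∈ Finset.Icc 1 S.T)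
    (hmem : S.memFam hfam) (hptw : ∀ z, Tendsto (fun ε => hfam ε z) (𝓝[>] 0) (𝓝 (h z)))
    {εs : ℕ → ℝ} (hεs : Tendsto εs atTop (𝓝[>] 0)) (x : ℤ) {u : U} {η : ℝ → U}
    (hη : Tendsto (fun n => η (εs n)) atTop (𝓝 u)) :
    Tendsto (fun n => S.lamE (εs n) t x (η (εs n)) (hfam (εs n))) atTop
      (𝓝 (S.lam t x u h)) := by
  classical
  have hcofinite : 𝓝[>] (0 : ℝ) ≤ cofinite := (nhdsGT_le_nhdsNE 0).trans (nhdsNE_le_cofinite 0)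
  have huu : Tendsto ((Set.range εs).piecewise η fun _ => u) (𝓝[>] 0) (𝓝 u) :=
    tendsto_piecewise_range_of_le_cofinite hcofinite (by rwa [Nat.cofinite_eq_atTop])
  refine ((hS.tendsto_lamE ht hmem hptw x huu).comp hεs).congr fun n => ?_
  rw [Function.comp_apply, Set.piecewise_eq_of_mem _ _ _ (Set.mem_range_self n)]

theorem bddAbove_range_cost_of_isMin (hS : S.HasLaplaceLimit t) (ht : t ∈ Finset.Icc 1 S.T)
    (hmem : S.memFam hfam) (hptw : ∀ z, Tendsto (fun ε => hfam ε z) (𝓝[>] 0) (𝓝 (h z)))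
    {εs : ℕ → ℝ} (hεs_mem : ∀ n, εs n ∈ Set.Ioc 0 S.eps0) (hεs : Tendsto εs atTop (𝓝[>] 0))
    (x : ℤ) {η : ℝ → U}
    (hη : ∀ n u, S.f t t x (η (εs n)) + S.lamE (εs n) t x (η (εs n)) (hfam (εs n)) ≤
      S.f t t x u + S.lamE (εs n) t x u (hfam (εs n))) :
    BddAbove (Set.range fun n => S.f t t x (η (εs n))) := by
  set u₀ : U := η 0
  obtain ⟨c, hc⟩ := hmem.2.1
  obtain ⟨M, hM⟩ := (hS.tendsto_lamE_seq ht hmem hptw hεs x (η := fun _ => u₀)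
    tendsto_const_nhds).bddAbove_range
  refine ⟨S.f t t x u₀ + M - c, ?_⟩
  rintro _ ⟨n, rfl⟩
  have hmin := hη n u₀
  have hupper : S.lamE (εs n) t x u₀ (hfam (εs n)) ≤ M := hM ⟨n, rfl⟩
  have hlower : c ≤ S.lamE (εs n) t x (η (εs n)) (hfam (εs n)) :=
    le_entropicRisk (hεs_mem n).1 (S.q_nonneg _ (hεs_mem n) t ht x _)
      (S.q_pmf _ (hεs_mem n) t ht x _) (hc _ (hεs_mem n))
      (hS.summable_of_memBV ht (hmem.1 _ (hεs_mem n)) (hεs_mem n) x _)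
  simp only
  linarith

end HasLaplaceLimit

end RSSetup

theorem statement13_general {U : Type*} [MetricSpace U] (S : RSSetup U) (t : ℕ)
    (ht : t ∈ Finset.Icc 1 S.T) (hS : S.HasLaplaceLimit t)
    (hcont : ∀ x : ℤ, Continuous fun u : U => S.f t t x u)
    (hcompact : ∀ (x : ℤ) (K : ℝ), IsCompact {u : U | S.f t t x u ≤ K})
    (hfam : ℝ → ℤ → ℝ) (hmem : S.memFam hfam) (h : ℤ → ℝ)
    (hptw : ∀ x : ℤ, Tendsto (fun ε => hfam ε x) (𝓝[>] 0) (𝓝 (h x)))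
    (ηε : ℝ → ℤ → U)
    (hηε : ∀ ε ∈ Set.Ioc (0 : ℝ) S.eps0, ∀ (x : ℤ) (u : U),
      S.f t t x (ηε ε x) + S.lamE ε t x (ηε ε x) (hfam ε) ≤
        S.f t t x u + S.lamE ε t x u (hfam ε))
    (εs : ℕ → ℝ) (hεs_mem : ∀ n, εs n ∈ Set.Ioc (0 : ℝ) S.eps0)
    (hεs : Tendsto εs atTop (𝓝 0)) :
    (∃ φ : ℕ → ℕ, StrictMono φ ∧ ∃ η0 : ℤ → U,
      ∀ x : ℤ, Tendsto (fun k => ηε (εs (φ k)) x) atTop (𝓝 (η0 x))) ∧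
    ∀ η0 : ℤ → U, (∀ x : ℤ, Tendsto (fun n => ηε (εs n) x) atTop (𝓝 (η0 x))) →
      ∀ (x : ℤ) (u : U), S.f t t x (η0 x) + S.lam t x (η0 x) h ≤ S.f t t x u + S.lam t x u h := by
  have hεs' : Tendsto εs atTop (𝓝[>] 0) :=
    tendsto_nhdsWithin_iff.2 ⟨hεs, .of_forall fun n => (hεs_mem n).1⟩
  refine ⟨exists_subseq_tendsto_of_isCompact_sublevel hcompact fun x =>
    hS.bddAbove_range_cost_of_isMin ht hmem hptw hεs_mem hεs' x (η := fun ε => ηε ε x)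
      fun n => hηε _ (hεs_mem n) x, fun η0 hη0 x u => ?_⟩
  have hcost := ((hcont x).tendsto (η0 x)).comp (hη0 x)
  have hselection := hS.tendsto_lamE_seq ht hmem hptw hεs' x (η := fun ε => ηε ε x) (hη0 x)
  have hcompetitor := hS.tendsto_lamE_seq ht hmem hptw hεs' x (η := fun _ => u) tendsto_const_nhds
  exact le_of_tendsto_of_tendsto' (hcost.add hselection) (hcompetitor.const_add (S.f t t x u))
    fun n => hηε _ (hεs_mem n) x u

/-- Under Assumptions (A), (B) and (C): let `{h^ε} ∈ 𝓑_V` with `h^ε → h`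
pointwise and let `ηε ε` be argmin selections for `u ↦ f_{t,t}(x,u) + Λ^ε_t(x,u;h^ε)`. Then
every sequence `ε_n → 0⁺` has a subsequence along which the selections converge pointwise on
`ℤ`, and every pointwise limit `η⁰` (along any sequence `ε_n → 0⁺`) is an argmin selection for
`u ↦ f_{t,t}(x,u) + Λ_t(x,u;h)`. -/
theorem statement13 {U : Type*} [MetricSpace U] [CompleteSpace U] [Nonempty U]
    (S : RSSetup U) (lam0 : ℝ) (hA : S.AssumptionA lam0) (hB : S.AssumptionB)
    (hC : S.AssumptionC lam0)
    (hfam : ℝ → ℤ → ℝ) (hmem : S.memFam hfam)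
    (h : ℤ → ℝ)
    (hptw : ∀ x : ℤ, Filter.Tendsto (fun ε => hfam ε x)
      (nhdsWithin 0 (Set.Ioi 0)) (nhds (h x)))
    (t : ℕ) (ht : t ∈ Finset.Icc 1 S.T)
    (ηε : ℝ → ℤ → U)
    (hηε : ∀ ε ∈ Set.Ioc (0 : ℝ) S.eps0, ∀ (x : ℤ) (u : U),
      S.f t t x (ηε ε x) + S.lamE ε t x (ηε ε x) (hfam ε) ≤
        S.f t t x u + S.lamE ε t x u (hfam ε)) :
    (∀ εs : ℕ → ℝ, (∀ n, εs n ∈ Set.Ioc (0 : ℝ) S.eps0) →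
      Filter.Tendsto εs Filter.atTop (nhds 0) →
      ∃ φ : ℕ → ℕ, StrictMono φ ∧ ∃ η0 : ℤ → U,
        ∀ x : ℤ, Filter.Tendsto (fun k => ηε (εs (φ k)) x) Filter.atTop (nhds (η0 x))) ∧
    (∀ εs : ℕ → ℝ, (∀ n, εs n ∈ Set.Ioc (0 : ℝ) S.eps0) →
      Filter.Tendsto εs Filter.atTop (nhds 0) →
      ∀ η0 : ℤ → U,
        (∀ x : ℤ, Filter.Tendsto (fun n => ηε (εs n) x) Filter.atTop (nhds (η0 x))) →
        ∀ (x : ℤ) (u : U),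
          S.f t t x (η0 x) + S.lam t x (η0 x) h ≤ S.f t t x u + S.lam t x u h) := by
  have hgen := statement13_general S t ht (RSSetup.AssumptionA.hasLaplaceLimit hA ht)
    (hB.2.2.1 t ht) (hB.2.2.2 t ht) hfam hmem h hptw ηε hηε
  exact ⟨fun εs hεs hlim => (hgen εs hεs hlim).1, fun εs hεs hlim => (hgen εs hεs hlim).2⟩
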